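/- (Halving lowers the equilibrium price and hashrate.) Let 0 < B₂ < B₁ be two block subsidies and, for i = 1,2, let H_i(P) denote the unique H > 0 with H·φ(H) = P·(B_i+Φ) and D_agg,i(P) = D(P, ς(P, H_i(P))). Suppose D_agg,i is strictly decreasing on (0,∞) for i = 1,2, and for some Q > 0 let P_i* > 0 satisfy D_agg,i(P_i*) = Q for i = 1,2. Then P₂* < P₁* and H₂(P₂*) < H₁(P₁*): the post-halving equilibrium features both a strictly lower price and a strictly lower hashrate. -/

import Mathlib

open Filter

/-- If `φ` is strictly increasing and nonnegative on `[0, ∞)`, then strict comparison of the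
values of `x * φ x` forces strict comparison of the arguments. -/
theorem lt_of_mul_apply_lt_mul_apply {φ : ℝ → ℝ} (hφm : StrictMonoOn φ (Set.Ici 0))
    (hφ0 : 0 ≤ φ 0) {a b : ℝ} (ha : 0 ≤ a) (hb : 0 ≤ b) (h : a * φ a < b * φ b) : a < b := by
  by_contra! hba
  have hφba : φ b ≤ φ a := hφm.monotoneOn hb ha hba
  have hφb : 0 ≤ φ b := hφ0.trans (hφm.monotoneOn Set.self_mem_Ici hb hb)
  exact absurd (mul_le_mul hba hφba hφb ha) h.not_ge

/-- At a fixed positive price, total demand is strictly increasing in perceived safety. -/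
theorem demand_lt_demand_of_safety_lt {θU θS δ e P s t : ℝ} (hθU : 0 < θU) (hθS : 0 < θS)
    (hP : 0 < P) (hst : s < t) :
    θU * s * P ^ (-e) + (θS * s - δ) * P⁻¹ < θU * t * P ^ (-e) + (θS * t - δ) * P⁻¹ := by
  have hpow : 0 < P ^ (-e) := Real.rpow_pos_of_pos hP _
  have hinv : 0 < P⁻¹ := inv_pos.mpr hP
  gcongr

/-- **Halving lowers the equilibrium price and hashrate.** Let `0 < B₂ < B₁`
be two block subsidies and, for `i = 1,2`, let `H_i(P)` denote the unique `H > 0` with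
`H·φ(H) = P·(B_i+Φ)` and `D_agg,i(P) = D(P, ς(P, H_i(P)))`. Suppose `D_agg,i` is strictly
decreasing on `(0,∞)` for `i = 1,2`, and for some `Q > 0` let `P_i* > 0` satisfy
`D_agg,i(P_i*) = Q`. Then `P₂* < P₁*` and `H₂(P₂*) < H₁(P₁*)`: the post-halving equilibrium
features both a strictly lower price and a strictly lower hashrate. -/
theorem halving_lowers_equilibrium_price_and_hashrate
    (φ : ℝ → ℝ)
    (hφc : ContinuousOn φ (Set.Ici 0))
    (hφm : StrictMonoOn φ (Set.Ici 0))
    (hφ0 : 0 ≤ φ 0)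
    (hφtop : Filter.Tendsto (fun H : ℝ => H * φ H) Filter.atTop Filter.atTop)
    (Φ : ℝ) (hΦ : 0 ≤ Φ)
    (B₁ B₂ : ℝ) (hB₂ : 0 < B₂) (hB : B₂ < B₁)
    (H₁ H₂ : ℝ → ℝ)
    (hH₁ : ∀ P : ℝ, 0 < P → 0 < H₁ P ∧ H₁ P * φ (H₁ P) = P * (B₁ + Φ))
    (hH₂ : ∀ P : ℝ, 0 < P → 0 < H₂ P ∧ H₂ P * φ (H₂ P) = P * (B₂ + Φ))
    (Ψ : ℝ → ℝ)
    (hΨc : Continuous Ψ)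
    (hΨm : StrictMono Ψ)
    (hΨ01 : ∀ x : ℝ, 0 < Ψ x ∧ Ψ x < 1)
    (hΨbot : Tendsto Ψ atBot (nhds 0))
    (hΨtop : Tendsto Ψ atTop (nhds 1))
    (g k σ sstar : ℝ) (hg : 0 < g) (hk : 0 < k) (hσ : 0 < σ)
    (θU θS δ e : ℝ) (hθU : 0 < θU) (hθS : 0 < θS) (hδ : 0 ≤ δ) (he : 0 < e)
    (hanti₁ : StrictAntiOn
      (fun P : ℝ =>
        θU * Ψ ((sstar - g * P + k * H₁ P) / σ) * P ^ (-e) +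
          (θS * Ψ ((sstar - g * P + k * H₁ P) / σ) - δ) * P⁻¹) (Set.Ioi 0))
    (hanti₂ : StrictAntiOn
      (fun P : ℝ =>
        θU * Ψ ((sstar - g * P + k * H₂ P) / σ) * P ^ (-e) +
          (θS * Ψ ((sstar - g * P + k * H₂ P) / σ) - δ) * P⁻¹) (Set.Ioi 0))
    (Q : ℝ) (hQ : 0 < Q)
    (P₁ P₂ : ℝ) (hP₁ : 0 < P₁) (hP₂ : 0 < P₂)
    (hclear₁ : θU * Ψ ((sstar - g * P₁ + k * H₁ P₁) / σ) * P₁ ^ (-e) +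
        (θS * Ψ ((sstar - g * P₁ + k * H₁ P₁) / σ) - δ) * P₁⁻¹ = Q)
    (hclear₂ : θU * Ψ ((sstar - g * P₂ + k * H₂ P₂) / σ) * P₂ ^ (-e) +
        (θS * Ψ ((sstar - g * P₂ + k * H₂ P₂) / σ) - δ) * P₂⁻¹ = Q) :
    P₂ < P₁ ∧ H₂ P₂ < H₁ P₁ := by
  have hB₂Φ : 0 < B₂ + Φ := by linarith
  have hprice : P₂ < P₁ := by
    by_contra! hle
    have hH : H₂ P₁ < H₁ P₁ := by
      refine lt_of_mul_apply_lt_mul_apply hφm hφ0 (hH₂ P₁ hP₁).1.le (hH₁ P₁ hP₁).1.le ?_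
      rw [(hH₂ P₁ hP₁).2, (hH₁ P₁ hP₁).2]
      gcongr
    have hsafety : Ψ ((sstar - g * P₁ + k * H₂ P₁) / σ) <
        Ψ ((sstar - g * P₁ + k * H₁ P₁) / σ) := by
      apply hΨm
      gcongr
    have hdemand := demand_lt_demand_of_safety_lt (δ := δ) (e := e) hθU hθS hP₁ hsafety
    have hmono := hanti₂.antitoneOn hP₁ hP₂ hle
    linarith
  refine ⟨hprice, ?_⟩
  refine lt_of_mul_apply_lt_mul_apply hφm hφ0 (hH₂ P₂ hP₂).1.le (hH₁ P₁ hP₁).1.le ?_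
  rw [(hH₂ P₂ hP₂).2, (hH₁ P₁ hP₁).2]
  gcongr
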